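/- arXiv:1701.07434 — 4 statements merged into one kernel-verified Lean document; each statement's English description precedes it below -/
import Mathlib

section
/- Let (M, d, Γ) be a spherically complete ultrametric space, σ : M → M a contraction that is strictly contracting on orbits, and m* the unique fixed point of σ. Then for every m ∈ M, d(m, σ(m)) = d(m, m*); and for every m ≠ m*, d(σ(m), m*) < d(m, m*). -/
/-!
For `x : M` let `B x` be the ball about `x` of radius `d x (σ x)`. As `σ` is a contraction,
`y ∈ B x` implies `B y ⊆ B x`. Spherical completeness therefore gives lower bounds for chains
of such balls, and Zorn's lemma yields a minimal `B x ⊆ B m`. Strict contraction on orbits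
forces `σ x = x`, since otherwise `B (σ x)` would be a strictly smaller ball. Hence `x` is the
fixed point, which thus lies in `B m`: `d m mstar ≤ d m (σ m)`. The reverse inequality is the
ultrametric inequality, and the second claim is the first one applied to both `m` and `σ m`.
-/

/-- An ultrametric on `M` with values in a linearly ordered set `Γ` with least
element `⊥` (playing the role of `0`). -/
def IsUltrametric {M : Type*} {Γ : Type*} [LinearOrder Γ] [OrderBot Γ]
    (d : M → M → Γ) : Prop :=
  (∀ m n, d m n = ⊥ ↔ m = n) ∧ (∀ m n, d m n = d n m) ∧
  (∀ l m n, d l n ≤ max (d l m) (d m n))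

/-- let `(M, d, Γ)` be a spherically complete ultrametric space,
`σ` a contraction that is strictly contracting on orbits, and `m*` the unique
fixed point of `σ`.  Then for every `m`, `d m (σ m) = d m m*`, and for every
`m ≠ m*`, `d (σ m) m* < d m m*`. -/
theorem dist_to_fixed_point {M : Type*} {Γ : Type*}
    [LinearOrder Γ] [OrderBot Γ] (d : M → M → Γ) (hd : IsUltrametric d)
    (hsc : ∀ C : Set (Set M), C.Nonempty →
      (∀ B ∈ C, ∃ (r : Γ) (m : M), B = {n | d m n ≤ r}) →
      IsChain (· ⊆ ·) C → (⋂₀ C).Nonempty)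
    (σ : M → M)
    (hcontr : ∀ m n, d (σ m) (σ n) ≤ d m n)
    (horb : ∀ m, σ m = m ∨ d (σ m) (σ (σ m)) < d m (σ m))
    (mstar : M) (hfix : σ mstar = mstar) (huniq : ∀ x, σ x = x → x = mstar) :
    (∀ m, d m (σ m) = d m mstar) ∧
    (∀ m, m ≠ mstar → d (σ m) mstar < d m mstar) := by
  obtain ⟨h0, hs, ht⟩ := hd
  let B : M → Set M := fun x => {n | d x n ≤ d x (σ x)}
  have hself : ∀ x, x ∈ B x := fun x => by
    change d x x ≤ _
    rw [(h0 x x).2 rfl]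
    exact bot_le
  have hsub : ∀ x y, y ∈ B x → B y ⊆ B x := by
    intro x y (hy : d x y ≤ d x (σ x)) z (hz : d y z ≤ d y (σ y))
    change d x z ≤ d x (σ x)
    have hyx : d y x ≤ d x (σ x) := hs x y ▸ hy
    have hyσ : d y (σ y) ≤ d x (σ x) :=
      (ht y x (σ y)).trans (max_le hyx
        ((ht x (σ x) (σ y)).trans (max_le le_rfl ((hcontr x y).trans hy))))
    exact (ht x y z).trans (max_le hy (hz.trans hyσ))
  have hmem : ∀ m, mstar ∈ B m := by
    intro m
    obtain ⟨b, hbm, hbmin⟩ := zorn_superset_nonempty (Set.range B) (by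
      intro C hC hchain hne
      obtain ⟨z, hz⟩ := hsc C hne (fun b hb => by
        obtain ⟨x, rfl⟩ := hC hb
        exact ⟨d x (σ x), x, rfl⟩) hchain
      refine ⟨B z, ⟨z, rfl⟩, fun b hb => ?_⟩
      obtain ⟨x, rfl⟩ := hC hb
      exact hsub x z (hz _ hb)) (B m) ⟨m, rfl⟩
    obtain ⟨x, rfl⟩ := hbmin.prop
    have hx : σ x = x := by
      refine (horb x).resolve_right fun hlt => ?_
      -- By minimality `x ∈ B (σ x)`, against strict contraction on the orbit of `x`.
      have hxmem : d (σ x) x ≤ d (σ x) (σ (σ x)) :=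
        hbmin.le_of_le ⟨σ x, rfl⟩ (hsub x (σ x) (le_refl (d x (σ x)))) (hself x)
      rw [hs (σ x) x] at hxmem
      exact hxmem.not_gt hlt
    exact huniq x hx ▸ hbm (hself x)
  have heq : ∀ m, d m (σ m) = d m mstar := by
    intro m
    refine le_antisymm ((ht m mstar (σ m)).trans (max_le le_rfl ?_)) (hmem m)
    have h := hcontr mstar m
    rwa [hfix, hs mstar m] at h
  refine ⟨heq, fun m hm => ?_⟩
  rw [← heq, ← heq]
  exact (horb m).resolve_left fun h => hm (huniq m h)
end

section
/- Let M be a set, σ : M → M, and C_0, C_1, …, C_K subsets of M with C_0 = {m*} for some m* ∈ M, C_K = M, C_r ⊊ C_s whenever 0 ≤ r < s ≤ K, σ(m) ∈ C_r whenever m ∈ C_{r+1} (for 0 ≤ r < K), and σ(m*) = m*. Define C(m) = min{i : m ∈ C_i} and d_C(m, n) = 0 if m = n, and d_C(m, n) = max(C(m), C(n)) if m ≠ n. Then (M, d_C, {0, 1, …, K}) is an ultrametric space, and σ is a contraction that is strictly contracting on orbits with respect to d_C. -/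
/-!
Everything is controlled by the index `C(m)`: it is at most `K`, it vanishes only at `m*`
(since `C 0 = {m*}`), and `σ` lowers it by at least one until it reaches `0`
(`Cidx_map_le`). The ultrametric inequality for `d_C` is that of `max`; uniqueness of the point
of index `0` gives `d_C m n = 0 → m = n`; the drop of the index under `σ` gives both
contraction properties.
-/

/-- Index of the innermost of the sets `C i` containing `m`. -/
noncomputable def Cidx {M : Type*} (C : ℕ → Set M) (m : M) : ℕ :=
  sInf {i | m ∈ C i}

open Classical in
/-- The distance induced by a nested family of sets: `d_C m n = 0` if `m = n`,
and `d_C m n = max (C(m)) (C(n))` otherwise. -/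
noncomputable def dC {M : Type*} (C : ℕ → Set M) (m n : M) : ℕ :=
  if m = n then 0 else max (Cidx C m) (Cidx C n)

theorem Cidx_le {M : Type*} {C : ℕ → Set M} {m : M} {i : ℕ} (h : m ∈ C i) : Cidx C m ≤ i :=
  Nat.sInf_le h

theorem mem_Cidx {M : Type*} {C : ℕ → Set M} {m : M} {i : ℕ} (h : m ∈ C i) :
    m ∈ C (Cidx C m) :=
  Nat.sInf_mem (s := {i | m ∈ C i}) ⟨i, h⟩

/-- The map `σ` lowers the index by at least one; the truncated subtraction covers `m = m*`,
which has index `0` and is fixed. -/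
theorem Cidx_map_le {M : Type*} {σ : M → M} {K : ℕ} {C : ℕ → Set M} {mstar : M}
    (hC0 : C 0 = {mstar}) (hCK : C K = Set.univ)
    (hstep : ∀ r < K, ∀ m ∈ C (r + 1), σ m ∈ C r) (hfix : σ mstar = mstar) (m : M) :
    Cidx C (σ m) ≤ Cidx C m - 1 := by
  have hK : m ∈ C K := hCK ▸ Set.mem_univ m
  have hle := Cidx_le hK
  have hmem := mem_Cidx hK
  apply Cidx_le
  cases h : Cidx C m with
  | zero =>
    rw [h, hC0, Set.mem_singleton_iff] at hmem
    simp [hmem, hfix, hC0]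
  | succ r =>
    rw [h] at hmem hle
    exact hstep r hle m hmem

/-- given a strictly increasing chain of subsets
`C 0 = {m*} ⊊ C 1 ⊊ ⋯ ⊊ C K = M` with `σ` mapping `C (r+1)` into `C r` and
`σ m* = m*`, the function `d_C` is an ultrametric on `M` with values in
`{0, 1, …, K}`, and `σ` is a contraction that is strictly contracting on orbits
with respect to `d_C`. -/
theorem ultrametric_from_boxes {M : Type*} (σ : M → M) (K : ℕ)
    (C : ℕ → Set M) (mstar : M)
    (hC0 : C 0 = {mstar})
    (hCK : C K = Set.univ)
    (hchain : ∀ r s, r < s → s ≤ K → C r ⊂ C s)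
    (hstep : ∀ r < K, ∀ m ∈ C (r + 1), σ m ∈ C r)
    (hfix : σ mstar = mstar) :
    (∀ m n, dC C m n ≤ K) ∧
    (∀ m n, dC C m n = 0 ↔ m = n) ∧
    (∀ m n, dC C m n = dC C n m) ∧
    (∀ l m n, dC C l n ≤ max (dC C l m) (dC C m n)) ∧
    (∀ m n, dC C (σ m) (σ n) ≤ dC C m n) ∧
    (∀ m, σ m = m ∨ dC C (σ m) (σ (σ m)) < dC C m (σ m)) := by
  have hle : ∀ m, Cidx C m ≤ K := fun m => Cidx_le (hCK ▸ Set.mem_univ m)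
  have hzero : ∀ m, Cidx C m = 0 → m = mstar := fun m h => by
    have hmem := mem_Cidx (C := C) (m := m) (i := K) (hCK ▸ Set.mem_univ m)
    rwa [h, hC0, Set.mem_singleton_iff] at hmem
  have hdrop := Cidx_map_le hC0 hCK hstep hfix
  refine ⟨fun m n => ?_, fun m n => ?_, fun m n => ?_, fun l m n => ?_, fun m n => ?_,
    fun m => ?_⟩
  · have := hle m
    have := hle n
    unfold dC
    split_ifs <;> omega
  · unfold dC
    split_ifs with h
    · simp [h]
    · refine ⟨fun h0 => ?_, fun e => absurd e h⟩
      rw [hzero m (by omega), hzero n (by omega)]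
  · by_cases h : m = n
    · rw [h]
    · simp [dC, h, Ne.symm h, max_comm]
  · by_cases h1 : l = m
    · simp [h1]
    by_cases h2 : m = n
    · simp [h2]
    unfold dC
    rw [if_neg h1, if_neg h2]
    split_ifs <;> omega
  · by_cases h : m = n
    · simp [h, dC]
    have := hdrop m
    have := hdrop n
    unfold dC
    rw [if_neg h]
    split_ifs <;> omega
  · by_cases h : σ m = m
    · exact Or.inl h
    right
    -- A point of index `0` is `m*`, which `σ` fixes.
    have hpos : Cidx C m ≠ 0 := fun h0 => h (by rw [hzero m h0, hfix])
    have := hdrop m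
    have := hdrop (σ m)
    unfold dC
    rw [if_neg (Ne.symm h)]
    split_ifs <;> omega
end

section
/- With the multipath routing state space M, distance d, and best-response operator σ defined from a finite graph G with destination d and a strictly inflationary preorder ⪯ on the set 𝒫 of simple paths to d, the operator σ is a strict contraction: d(σ(m), σ(n)) < d(m, n) for all m ≠ n in M. -/
/-!
If a path `q = (i j) p` lies in `σ m` but not in `σ n`, then some path strictly preferred to `q`
lies in the symmetric difference of `m` and `n`. Either `p ∉ n`, and `p ≺ q` is such a path
because the preorder is strictly inflationary; or `q` is a candidate for `n` which is beaten by
another candidate `b = (i j') p'` with `p' ∈ n`. In the latter case minimality of `q` among the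
candidates for `m` forces `p' ∉ m`, and `p' ≺ b ≺ q` (`exists_lt_of_mem_bestResp`). Since `h` is
strictly antitone (`hval_lt`), every height occurring in the symmetric difference of `σ m` and
`σ n` is smaller than one occurring in that of `m` and `n`. When `σ m = σ n` the claim reduces to
`0 < d m n`, which holds because all heights are positive.
-/

/-- A simple path in the directed graph with vertex set `V` and arc relation `E`,
ending at the destination `dest`: a duplicate-free nonempty list of vertices,
consecutive vertices joined by arcs, whose last vertex is `dest`.  The empty path
`ε` at `dest` is represented by the list `[dest]`. -/
structure SimplePath (V : Type*) (E : V → V → Prop) (dest : V) where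
  verts : List V
  ends : verts.getLast? = some dest
  nodup : verts.Nodup
  chain : verts.Chain' E

variable {V : Type*} {E : V → V → Prop} {dest : V}

/-- The candidate paths at node `i` given a state `x`: the simple paths of the
form `(i j) p` where `(i, j)` is an arc and `p ∈ x` is a path with source `j`. -/
def cand (x : Set (SimplePath V E dest)) (i : V) : Set (SimplePath V E dest) :=
  {q | ∃ p ∈ x, ∃ j, p.verts.head? = some j ∧ E i j ∧ q.verts = i :: p.verts}

/-- The minimal (most preferred) elements of a set of paths, with respect to the
strict part `≺` of the preference preorder `⪯`:
`min A = {a ∈ A : no b ∈ A has b ≺ a}`. -/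
def minSet {P : Type*} (pre : P → P → Prop) (A : Set P) : Set P :=
  {a | a ∈ A ∧ ∀ b ∈ A, ¬ (pre b a ∧ ¬ pre a b)}

/-- The myopic best-response operator on the multipath routing state space
(states are identified with sets of simple paths to `dest`): the component of
`σ x` at `dest` is `{ε}`, and the component at `i ≠ dest` is the set of minimal
candidate paths at `i`. -/
def bestResp (pre : SimplePath V E dest → SimplePath V E dest → Prop)
    (x : Set (SimplePath V E dest)) : Set (SimplePath V E dest) :=
  {q | q.verts = [dest] ∨ ∃ i, i ≠ dest ∧ q ∈ minSet pre (cand x i)}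

/-- The height of a path: `h p = |{q : p ⪯ q}|`, the number of paths that `p` is
weakly preferred to be below. -/
noncomputable def hval (pre : SimplePath V E dest → SimplePath V E dest → Prop)
    (p : SimplePath V E dest) : ℕ :=
  Nat.card {q : SimplePath V E dest // pre p q}

/-- The ultrametric distance on states: the maximum of `h` over the symmetric
difference `(m \ n) ∪ (n \ m)` (equal to `0` when the symmetric difference is
empty). -/
noncomputable def pathDist (pre : SimplePath V E dest → SimplePath V E dest → Prop)
    (m n : Set (SimplePath V E dest)) : ℕ :=
  sSup (hval pre '' ((m \ n) ∪ (n \ m)))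

/-- The preference preorder `⪯` is strictly inflationary: any simple path `p`
(from `j` to `dest`) is strictly preferred to any simple one-arc extension
`(i j) p` of it. -/
def StrictlyInflationary (pre : SimplePath V E dest → SimplePath V E dest → Prop) : Prop :=
  ∀ (p : SimplePath V E dest) (i j : V), p.verts.head? = some j → E i j →
    ∀ q : SimplePath V E dest, q.verts = i :: p.verts → pre p q ∧ ¬ pre q p

instance simplePath_finite [Finite V] : Finite (SimplePath V E dest) := by
  classical
  haveI := Fintype.ofFinite V
  refine Finite.of_injective
    (fun p : SimplePath V E dest => (⟨p.verts, p.nodup⟩ : {l : List V // l.Nodup})) ?_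
  rintro ⟨a, _, _, _⟩ ⟨b, _, _, _⟩ h
  simpa using h

theorem hval_lt [Finite V] {pre : SimplePath V E dest → SimplePath V E dest → Prop}
    (hrefl : ∀ p, pre p p) (htrans : ∀ p q r, pre p q → pre q r → pre p r)
    {p q : SimplePath V E dest} (hpq : pre p q) (hqp : ¬ pre q p) :
    hval pre q < hval pre p := by
  refine Set.ncard_lt_ncard (s := {r | pre q r}) (t := {r | pre p r}) ?_ (Set.toFinite _)
  exact ⟨fun r hr => htrans p q r hpq hr, fun h => hqp (h (hrefl p))⟩

theorem hval_pos [Finite V] {pre : SimplePath V E dest → SimplePath V E dest → Prop}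
    (hrefl : ∀ p, pre p p) (p : SimplePath V E dest) : 0 < hval pre p := by
  haveI : Nonempty {q : SimplePath V E dest // pre p q} := ⟨⟨p, hrefl p⟩⟩
  exact Nat.card_pos

/-- The core of the contraction argument: a path gained or lost by the best response is
caused by a change of the state at a strictly preferred path. -/
theorem exists_lt_of_mem_bestResp {pre : SimplePath V E dest → SimplePath V E dest → Prop}
    (htrans : ∀ p q r, pre p q → pre q r → pre p r) (hinfl : StrictlyInflationary pre)
    {m n : Set (SimplePath V E dest)} {q : SimplePath V E dest}
    (hm : q ∈ bestResp pre m) (hn : q ∉ bestResp pre n) :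
    ∃ p ∈ (m \ n) ∪ (n \ m), pre p q ∧ ¬ pre q p := by
  rcases hm with hε | ⟨i, hi, ⟨p, hpm, j, hj, hE, hq⟩, hmin⟩
  · exact absurd (Or.inl hε) hn
  have hpq := hinfl p i j hj hE q hq
  by_cases hpn : p ∈ n
  · have hbeaten : ∃ b ∈ cand n i, pre b q ∧ ¬ pre q b := by
      by_contra hno
      exact hn (Or.inr ⟨i, hi, ⟨p, hpn, j, hj, hE, hq⟩, fun b hb h => hno ⟨b, hb, h⟩⟩)
    obtain ⟨b, ⟨p', hp'n, j', hj', hE', hb⟩, hbq, hqb⟩ := hbeaten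
    have hp'b := hinfl p' i j' hj' hE' b hb
    refine ⟨p', Or.inr ⟨hp'n, fun hp'm => ?_⟩, htrans _ _ _ hp'b.1 hbq,
      fun h => hqb (htrans _ _ _ h hp'b.1)⟩
    exact hmin b ⟨p', hp'm, j', hj', hE', hb⟩ ⟨hbq, hqb⟩
  · exact ⟨p, Or.inl ⟨hpm, hpn⟩, hpq⟩

theorem hval_le_pathDist [Finite V] (pre : SimplePath V E dest → SimplePath V E dest → Prop)
    {m n : Set (SimplePath V E dest)} {p : SimplePath V E dest}
    (hp : p ∈ (m \ n) ∪ (n \ m)) : hval pre p ≤ pathDist pre m n :=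
  le_csSup (Set.toFinite _).bddAbove (Set.mem_image_of_mem _ hp)

/-- for a finite graph with destination `dest` and a strictly
inflationary preference preorder on the simple paths to `dest`, the best-response
operator `σ` is a strict contraction with respect to the symmetric-difference
ultrametric: `d (σ m) (σ n) < d m n` for all `m ≠ n`. -/
theorem bestResp_strict_contraction {V : Type*} [Fintype V]
    {E : V → V → Prop} {dest : V}
    (pre : SimplePath V E dest → SimplePath V E dest → Prop)
    (hrefl : ∀ p, pre p p)
    (htrans : ∀ p q r, pre p q → pre q r → pre p r)
    (hinfl : StrictlyInflationary pre) :
    ∀ m n : Set (SimplePath V E dest), m ≠ n →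
      pathDist pre (bestResp pre m) (bestResp pre n) < pathDist pre m n := by
  intro m n hmn
  have hpos : 0 < pathDist pre m n := by
    obtain ⟨p, hp⟩ : ((m \ n) ∪ (n \ m)).Nonempty := Set.symmDiff_nonempty.2 hmn
    exact (hval_pos hrefl p).trans_le (hval_le_pathDist pre hp)
  rcases (hval pre '' ((bestResp pre m \ bestResp pre n) ∪
      (bestResp pre n \ bestResp pre m))).eq_empty_or_nonempty with h | h
  · rw [pathDist, h]
    simpa using hpos
  · -- A nonempty finite set of heights attains its supremum.
    obtain ⟨q, hq, hqd⟩ := h.csSup_mem (Set.toFinite _)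
    rw [pathDist, ← hqd]
    have hex : ∃ p ∈ (m \ n) ∪ (n \ m), pre p q ∧ ¬ pre q p := by
      rcases hq with ⟨h1, h2⟩ | ⟨h1, h2⟩
      · exact exists_lt_of_mem_bestResp htrans hinfl h1 h2
      · rw [Set.union_comm]
        exact exists_lt_of_mem_bestResp htrans hinfl h1 h2
    obtain ⟨p, hp, hpq, hqp⟩ := hex
    exact (hval_lt hrefl htrans hpq hqp).trans_le (hval_le_pathDist pre hp)
end

section
/- With the multipath routing state space M and best-response operator σ defined from a finite graph G with destination d and a strictly inflationary preorder ⪯ on the set 𝒫 of simple paths to d, there exists exactly one x ∈ M with σ(x) = x; that is, the multipath stable paths problem with strictly inflationary preferences has a unique stable path assignment. -/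
variable {V : Type*} {E : V → V → Prop} {dest : V}

/-- If membership of `q` in `T x` depends only on the part of `x` strictly below `q` for a
well-founded relation, then `T` has exactly one fixed point. -/
lemma existsUnique_fixed_of_wellFounded {P : Type*} {r : P → P → Prop} (wf : WellFounded r)
    (T : Set P → Set P)
    (hT : ∀ x y q, (∀ p, r p q → (p ∈ x ↔ p ∈ y)) → (q ∈ T x ↔ q ∈ T y)) :
    ∃! x : Set P, T x = x := by
  let F : (q : P) → ((p : P) → r p q → Prop) → Prop :=
    fun q ih => q ∈ T {p | ∃ h : r p q, ih p h}
  refine ⟨{q | wf.fix F q}, ?_, ?_⟩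
  · ext q
    rw [Set.mem_setOf_eq, wf.fix_eq]
    refine hT _ _ q fun p hp => ?_
    simp [hp]
  · intro y hy
    ext q
    induction q using wf.induction with
    | _ q ih =>
      rw [Set.mem_setOf_eq, wf.fix_eq, ← hy]
      refine hT _ _ q fun p hp => ?_
      rw [ih p hp]
      simp [hp]

lemma finite_simplePath [Finite V] : Finite (SimplePath V E dest) := by
  classical
  have := Fintype.ofFinite V
  refine Finite.of_injective
    (fun p : SimplePath V E dest => (⟨p.verts, p.nodup⟩ : {l : List V // l.Nodup})) ?_
  rintro ⟨l, _, _, _⟩ ⟨l', _, _, _⟩ h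
  simpa using h

/-- One direction of the locality of `σ`: a path stays in `σ` of a state when the state is
modified only at paths that are not strictly preferred to it. -/
lemma bestResp_local {pre : SimplePath V E dest → SimplePath V E dest → Prop}
    (htrans : ∀ p q r, pre p q → pre q r → pre p r) (hinfl : StrictlyInflationary pre)
    {x y : Set (SimplePath V E dest)} {q : SimplePath V E dest}
    (hxy : ∀ p, pre p q ∧ ¬ pre q p → (p ∈ x ↔ p ∈ y)) (hq : q ∈ bestResp pre x) :
    q ∈ bestResp pre y := by
  rcases hq with hq | ⟨i, hi, ⟨p, hp, j, hj, hE, hv⟩, hmin⟩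
  · exact Or.inl hq
  · refine Or.inr ⟨i, hi, ⟨p, (hxy p (hinfl p i j hj hE q hv)).1 hp, j, hj, hE, hv⟩, ?_⟩
    rintro b ⟨p', hp', k, hk, hE', hv'⟩ hb
    have hpb := hinfl p' i k hk hE' b hv'
    have hpq : pre p' q ∧ ¬ pre q p' :=
      ⟨htrans _ _ _ hpb.1 hb.1, fun h => hb.2 (htrans _ _ _ h hpb.1)⟩
    exact hmin b ⟨p', (hxy p' hpq).2 hp', k, hk, hE', hv'⟩ hb

/-- for a finite graph with destination `dest` and a strictly
inflationary preference preorder on the simple paths to `dest`, the best-response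
operator has exactly one fixed point: the multipath stable paths problem with
strictly inflationary preferences has a unique stable path assignment. -/
theorem bestResp_unique_fixed_point {V : Type*} [Fintype V]
    {E : V → V → Prop} {dest : V}
    (pre : SimplePath V E dest → SimplePath V E dest → Prop)
    (hrefl : ∀ p, pre p p)
    (htrans : ∀ p q r, pre p q → pre q r → pre p r)
    (hinfl : StrictlyInflationary pre) :
    ∃! x : Set (SimplePath V E dest), bestResp pre x = x := by
  have := finite_simplePath (V := V) (E := E) (dest := dest)
  let r : SimplePath V E dest → SimplePath V E dest → Prop := fun p q => pre p q ∧ ¬ pre q p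
  have : IsTrans _ r :=
    ⟨fun a b c hab hbc => ⟨htrans _ _ _ hab.1 hbc.1, fun h => hab.2 (htrans _ _ _ hbc.1 h)⟩⟩
  have : Std.Irrefl r := ⟨fun a h => h.2 h.1⟩
  exact existsUnique_fixed_of_wellFounded (Finite.wellFounded_of_trans_of_irrefl r) _
    fun x y q h => ⟨bestResp_local htrans hinfl h,
      bestResp_local htrans hinfl fun p hp => (h p hp).symm⟩
end
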